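/- Borel's Lemma with a linear constraint: Let E and F be real Banach spaces, let D : E → F be a continuous linear map, and let (a_n)_{n∈ℕ} be a sequence in E with D a_n = 0 for every n. Then there exists a smooth function f : ℝ → E such that iteratedDeriv n f 0 = a_n for every n ∈ ℕ and D (f t) = 0 for every t ∈ ℝ. -/

import Mathlib

/-!
Borel's series `∑ aₙ tⁿ / n!` is made convergent by cutting each monomial off near `0` and then
replacing the resulting `g` by `t ↦ c⁻ⁿ g (c t)`: this keeps the jet of a monomial of degree `n`
but divides every derivative of order `< n` by at least `c`, so for `c` large the `n`-th term has
all these derivatives below `2⁻ⁿ` and the series may be differentiated termwise. For the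
constraint, the series is summed inside the kernel, which is itself a Banach space.
-/

open Filter
open scoped ContDiff Topology

section JetRescale

variable {𝕜 E : Type*} [NontriviallyNormedField 𝕜] [NormedAddCommGroup E] [NormedSpace 𝕜 E]
  {f : 𝕜 → E} {c : 𝕜} {k n : ℕ}

/-- The dilation of `f` by the factor `c`, normalized so that the `n`-th derivative at `0` is
unchanged when `c ≠ 0`. Taking `c` large makes the derivatives of order `< n` small. -/
def jetRescale (n : ℕ) (c : 𝕜) (f : 𝕜 → E) (t : 𝕜) : E :=
  (c ^ n)⁻¹ • f (c * t)

theorem contDiff_jetRescale {N : WithTop ℕ∞} (hf : ContDiff 𝕜 N f) :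
    ContDiff 𝕜 N (jetRescale n c f) := by
  unfold jetRescale
  fun_prop

theorem hasCompactSupport_jetRescale (hc : c ≠ 0) (hf : HasCompactSupport f) :
    HasCompactSupport (jetRescale n c f) :=
  (hf.comp_smul hc).smul_left (f := fun _ ↦ (c ^ n)⁻¹)

theorem iteratedDeriv_jetRescale (hf : ContDiff 𝕜 k f) (t : 𝕜) :
    iteratedDeriv k (jetRescale n c f) t = (c ^ n)⁻¹ • c ^ k • iteratedDeriv k f (c * t) := by
  unfold jetRescale
  rw [iteratedDeriv_fun_const_smul_field, iteratedDeriv_comp_const_smul hf]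

theorem jet_jetRescale_eq_single {v : E} (hc : c ≠ 0) (hf : ContDiff 𝕜 ∞ f)
    (hjet : (iteratedDeriv · f 0) = Pi.single n v) :
    (iteratedDeriv · (jetRescale n c f) 0) = Pi.single n v := by
  funext k
  rw [iteratedDeriv_jetRescale (hf.of_le (mod_cast le_top)), mul_zero, congrFun hjet k]
  obtain rfl | hk := eq_or_ne k n
  · rw [Pi.single_eq_same, inv_smul_smul₀ (pow_ne_zero k hc)]
  · simp only [Pi.single_eq_of_ne hk, smul_zero]

theorem norm_iteratedDeriv_jetRescale_le {M : ℝ} (hc : 1 ≤ ‖c‖) (hk : k < n)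
    (hf : ContDiff 𝕜 k f) (hM : ∀ t, ‖iteratedDeriv k f t‖ ≤ M) (t : 𝕜) :
    ‖iteratedDeriv k (jetRescale n c f) t‖ ≤ M / ‖c‖ := by
  have hc₀ : 0 < ‖c‖ := one_pos.trans_le hc
  have hM₀ : 0 ≤ M := (norm_nonneg _).trans (hM 0)
  have hpow : ‖c‖ ^ k * ‖c‖ ≤ ‖c‖ ^ n := by
    rw [← pow_succ]
    exact pow_le_pow_right₀ hc hk
  calc ‖iteratedDeriv k (jetRescale n c f) t‖
      = ‖c‖ ^ k * ‖iteratedDeriv k f (c * t)‖ / ‖c‖ ^ n := by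
        rw [iteratedDeriv_jetRescale hf, norm_smul, norm_smul, norm_inv, norm_pow, norm_pow,
          inv_mul_eq_div]
    _ ≤ ‖c‖ ^ k * M / ‖c‖ ^ n := by gcongr; exact hM _
    _ ≤ M / ‖c‖ := by
        rw [div_le_div_iff₀ (by positivity) hc₀]
        calc ‖c‖ ^ k * M * ‖c‖ = M * (‖c‖ ^ k * ‖c‖) := by ring
          _ ≤ M * ‖c‖ ^ n := by gcongr

end JetRescale

theorem exists_contDiff_hasCompactSupport_eventuallyEq {V E : Type*}
    [NormedAddCommGroup V] [NormedSpace ℝ V] [FiniteDimensional ℝ V] [HasContDiffBump V]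
    [NormedAddCommGroup E] [NormedSpace ℝ E] {N : ℕ∞} {f : V → E} (hf : ContDiff ℝ N f) (x : V) :
    ∃ g : V → E, ContDiff ℝ N g ∧ HasCompactSupport g ∧ g =ᶠ[𝓝 x] f := by
  let φ : ContDiffBump x := default
  refine ⟨fun y ↦ φ y • f y, φ.contDiff.smul hf, φ.hasCompactSupport.smul_right, ?_⟩
  filter_upwards [φ.eventuallyEq_one] with y hy
  rw [hy, Pi.one_apply, one_smul]

section IteratedDeriv

variable {ι 𝕜 E F : Type*} [NontriviallyNormedField 𝕜] [NormedAddCommGroup E] [NormedSpace 𝕜 E]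
  [NormedAddCommGroup F] [NormedSpace 𝕜 F] {k : ℕ}

theorem iteratedDeriv_clm_comp (L : E →L[𝕜] F) {f : 𝕜 → E} {t : 𝕜} (hf : ContDiffAt 𝕜 k f t) :
    iteratedDeriv k (fun s ↦ L (f s)) t = L (iteratedDeriv k f t) := by
  simp only [iteratedDeriv_eq_iteratedFDeriv]
  exact DFunLike.congr_fun (L.iteratedFDeriv_comp_left hf le_rfl) _

theorem exists_forall_norm_iteratedDeriv_le {N : WithTop ℕ∞} {f : 𝕜 → E}
    (hf : ContDiff 𝕜 N f) (hsupp : HasCompactSupport f) (hk : k ≤ N) :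
    ∃ C, ∀ t, ‖iteratedDeriv k f t‖ ≤ C := by
  simp only [← norm_iteratedFDeriv_eq_norm_iteratedDeriv]
  exact (hf.continuous_iteratedFDeriv hk).bounded_above_of_compact_support
    (hsupp.iteratedFDeriv k)

theorem jet_monomial_eq_single [CharZero 𝕜] (n : ℕ) (v : E) :
    (iteratedDeriv · (fun t : 𝕜 ↦ (t ^ n / n.factorial) • v) 0) = Pi.single n v := by
  funext k
  rw [iteratedDeriv_smul_const (by fun_prop), iteratedDeriv_div_const, iteratedDeriv_fun_pow_zero]
  obtain rfl | hk := eq_or_ne k n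
  · rw [if_pos rfl, div_self (mod_cast k.factorial_ne_zero), one_smul, Pi.single_eq_same]
  · rw [if_neg hk, Nat.cast_zero, zero_div, zero_smul, Pi.single_eq_of_ne hk]

theorem iteratedDeriv_tsum_apply [IsRCLikeNormedField 𝕜] [CompleteSpace E] {N : ℕ∞}
    {f : ι → 𝕜 → E} {u : ℕ → ι → ℝ} (hf : ∀ i, ContDiff 𝕜 N (f i))
    (hu : ∀ k : ℕ, k ≤ N → Summable (u k))
    (hfu : ∀ (k : ℕ) (i : ι) (t : 𝕜), k ≤ N → ‖iteratedDeriv k (f i) t‖ ≤ u k i)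
    (hk : k ≤ N) (t : 𝕜) :
    iteratedDeriv k (fun s ↦ ∑' i, f i s) t = ∑' i, iteratedDeriv k (f i) t := by
  simp only [← norm_iteratedFDeriv_eq_norm_iteratedDeriv] at hfu
  have hsum : Summable fun i ↦ iteratedFDeriv 𝕜 k (f i) t :=
    .of_norm_bounded (hu k hk) fun i ↦ hfu k i t hk
  simp only [iteratedDeriv_eq_iteratedFDeriv, iteratedFDeriv_tsum_apply hf hu hfu hk]
  exact (ContinuousMultilinearMap.hasSum_eval hsum.hasSum _).tsum_eq.symm

end IteratedDeriv

section Borel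

variable {E : Type*} [NormedAddCommGroup E] [NormedSpace ℝ E]

theorem exists_jet_eq_single_and_norm_iteratedDeriv_le (n : ℕ) (v : E) {ε : ℝ} (hε : 0 < ε) :
    ∃ f : ℝ → E, ContDiff ℝ ∞ f ∧ HasCompactSupport f ∧
      (iteratedDeriv · f 0) = Pi.single n v ∧ ∀ k < n, ∀ t, ‖iteratedDeriv k f t‖ ≤ ε := by
  obtain ⟨g, hg, hsupp, hgv⟩ := exists_contDiff_hasCompactSupport_eventuallyEq
    (N := ⊤) (f := fun t : ℝ ↦ (t ^ n / n.factorial : ℝ) • v) (by fun_prop) 0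
  have hjet : (iteratedDeriv · g 0) = Pi.single n v := by
    simpa only [hgv.iteratedDeriv_eq] using jet_monomial_eq_single n v
  choose M hM using fun k : ℕ ↦
    exists_forall_norm_iteratedDeriv_le (k := k) hg hsupp (mod_cast le_top)
  have hlarge : ∀ᶠ c : ℝ in atTop, ∀ k < n, M k / ε ≤ c :=
    (Set.finite_lt_nat n).eventually_all.2 fun k _ ↦ eventually_ge_atTop (M k / ε)
  obtain ⟨c, hMc, hc⟩ := (hlarge.and (eventually_ge_atTop 1)).exists
  have hc₀ : 0 < c := one_pos.trans_le hc
  have hnorm : ‖c‖ = c := Real.norm_of_nonneg hc₀.le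
  refine ⟨jetRescale n c g, contDiff_jetRescale hg, hasCompactSupport_jetRescale hc₀.ne' hsupp,
    jet_jetRescale_eq_single hc₀.ne' hg hjet, fun k hk t ↦ ?_⟩
  calc ‖iteratedDeriv k (jetRescale n c g) t‖
      ≤ M k / ‖c‖ := norm_iteratedDeriv_jetRescale_le (hc.trans_eq hnorm.symm) hk
        (hg.of_le (mod_cast le_top)) (hM k) t
    _ ≤ ε := by rw [hnorm]; exact (div_le_comm₀ hε hc₀).1 (hMc k hk)

theorem exists_contDiff_forall_iteratedDeriv_zero_eq [CompleteSpace E] (a : ℕ → E) :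
    ∃ f : ℝ → E, ContDiff ℝ ∞ f ∧ ∀ n, iteratedDeriv n f 0 = a n := by
  choose f hf hsupp hjet hsmall using fun n ↦
    exists_jet_eq_single_and_norm_iteratedDeriv_le n (a n) (ε := (1 / 2) ^ n) (by positivity)
  choose M hM using fun n k : ℕ ↦
    exists_forall_norm_iteratedDeriv_le (k := k) (hf n) (hsupp n) (mod_cast le_top)
  let u (k n : ℕ) : ℝ := if k < n then (1 / 2) ^ n else M n k
  have hu (k : ℕ) : Summable (u k) := by
    refine summable_geometric_two.congr_atTop ?_
    filter_upwards [eventually_gt_atTop k] with n hn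
    exact (if_pos hn).symm
  have hfu (k n : ℕ) (t : ℝ) : ‖iteratedDeriv k (f n) t‖ ≤ u k n := by
    by_cases hkn : k < n
    · exact (hsmall n k hkn t).trans_eq (if_pos hkn).symm
    · exact (hM n k t).trans_eq (if_neg hkn).symm
  refine ⟨fun t ↦ ∑' n, f n t, contDiff_tsum hf (fun k _ ↦ hu k) fun k n t _ ↦ ?_, fun k ↦ ?_⟩
  · exact norm_iteratedFDeriv_eq_norm_iteratedDeriv.trans_le (hfu k n t)
  · calc iteratedDeriv k (fun t ↦ ∑' n, f n t) 0
        = ∑' n, iteratedDeriv k (f n) 0 :=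
          iteratedDeriv_tsum_apply hf (fun k _ ↦ hu k) (fun k n t _ ↦ hfu k n t) le_top 0
      _ = ∑' n, Pi.single n (a n) k := tsum_congr fun n ↦ congrFun (hjet n) k
      _ = a k := by
          rw [tsum_eq_single k fun n hn ↦ Pi.single_eq_of_ne hn.symm _, Pi.single_eq_same]

theorem borel_lemma_with_constraint_general (K : Submodule ℝ E) [CompleteSpace K] (a : ℕ → E)
    (ha : ∀ n, a n ∈ K) :
    ∃ f : ℝ → E, ContDiff ℝ ∞ f ∧ (∀ n, iteratedDeriv n f 0 = a n) ∧ ∀ t, f t ∈ K := by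
  obtain ⟨g, hg, hjet⟩ := exists_contDiff_forall_iteratedDeriv_zero_eq fun n ↦ (⟨a n, ha n⟩ : K)
  refine ⟨fun t ↦ g t, K.subtypeL.contDiff.comp hg, fun n ↦ ?_, fun t ↦ (g t).2⟩
  calc iteratedDeriv n (fun t ↦ (g t : E)) 0
      = iteratedDeriv n g 0 :=
        iteratedDeriv_clm_comp K.subtypeL (hg.contDiffAt.of_le (mod_cast le_top))
    _ = a n := by rw [hjet]

end Borel

/-- **Borel's Lemma with a linear constraint**: if `D : E →L[ℝ] F` kills every term of
the sequence `a : ℕ → E`, then the sequence is realized as the jet at `0` of a smooth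
function `f : ℝ → E` taking values in the kernel of `D`. -/
theorem borel_lemma_with_constraint
    {E F : Type*} [NormedAddCommGroup E] [NormedSpace ℝ E] [CompleteSpace E]
    [NormedAddCommGroup F] [NormedSpace ℝ F] [CompleteSpace F]
    (D : E →L[ℝ] F) (a : ℕ → E) (ha : ∀ n : ℕ, D (a n) = 0) :
    ∃ f : ℝ → E, ContDiff ℝ (⊤ : ℕ∞) f ∧ (∀ n : ℕ, iteratedDeriv n f 0 = a n) ∧
      ∀ t : ℝ, D (f t) = 0 :=
  borel_lemma_with_constraint_general D.ker a ha
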